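/- arXiv:2109.07219 — 2 statements merged into one kernel-verified Lean document; each statement's English description precedes it below -/
import Mathlib

section
/- Fix r₁, r₂, φ ∈ ℝ with r₁ ≠ 0, r₂ ≠ 0 and sin φ ≠ 0. With h = diag(1, 1, r₂²), a₁ = a₂ = 0, a₃ = (0, 0, r₂²), and 𝕀 the moment of inertia matrix in Jacobi coordinates, the horizontal (reduced) metric g_{μν} = h_{μν} − a_μᵀ 𝕀⁻¹ a_ν equals diag(1, 1, r₁² r₂²/(r₁² + r₂²)); in particular g₃₃ = r₂² − r₂⁴/(r₁² + r₂²) = r₁² r₂²/(r₁² + r₂²). -/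
open Matrix Real

/-- For `r₁ ≠ 0`, `r₂ ≠ 0`, `sin φ ≠ 0`, the horizontal (reduced) metric
`g_{μν} = h_{μν} − a_μᵀ 𝕀⁻¹ a_ν` in Jacobi coordinates, with `h = diag(1,1,r₂²)`,
`a₁ = a₂ = 0`, `a₃ = (0,0,r₂²)`, equals `diag(1, 1, r₁² r₂²/(r₁² + r₂²))`;
in particular `g₃₃ = r₂² − r₂⁴/(r₁² + r₂²) = r₁² r₂²/(r₁² + r₂²)`. -/
theorem horizontalMetric_jacobi (r₁ r₂ φ : ℝ)
    (hr₁ : r₁ ≠ 0) (hr₂ : r₂ ≠ 0) (hφ : sin φ ≠ 0)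
    (𝕀 : Matrix (Fin 3) (Fin 3) ℝ)
    (h𝕀 : 𝕀 = !![r₂ ^ 2 * sin φ ^ 2, -(r₂ ^ 2 * sin φ * cos φ), 0;
                 -(r₂ ^ 2 * sin φ * cos φ), r₁ ^ 2 + r₂ ^ 2 * cos φ ^ 2, 0;
                 0, 0, r₁ ^ 2 + r₂ ^ 2])
    (h : Matrix (Fin 3) (Fin 3) ℝ)
    (hh : h = !![1, 0, 0; 0, 1, 0; 0, 0, r₂ ^ 2])
    (a : Fin 3 → Fin 3 → ℝ)
    (ha0 : a 0 = 0) (ha1 : a 1 = 0) (ha2 : a 2 = ![0, 0, r₂ ^ 2])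
    (g : Matrix (Fin 3) (Fin 3) ℝ)
    (hg : ∀ μ ν, g μ ν = h μ ν - a μ ⬝ᵥ 𝕀⁻¹.mulVec (a ν)) :
    g = !![1, 0, 0; 0, 1, 0; 0, 0, r₁ ^ 2 * r₂ ^ 2 / (r₁ ^ 2 + r₂ ^ 2)]
      ∧ r₂ ^ 2 - r₂ ^ 4 / (r₁ ^ 2 + r₂ ^ 2) = r₁ ^ 2 * r₂ ^ 2 / (r₁ ^ 2 + r₂ ^ 2) := by
  have hS : r₁ ^ 2 + r₂ ^ 2 ≠ 0 := by positivity
  have key : r₂ ^ 2 - r₂ ^ 4 / (r₁ ^ 2 + r₂ ^ 2)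
      = r₁ ^ 2 * r₂ ^ 2 / (r₁ ^ 2 + r₂ ^ 2) := by
    field_simp
    ring
  have hdet : 𝕀.det = r₁ ^ 2 * r₂ ^ 2 * sin φ ^ 2 * (r₁ ^ 2 + r₂ ^ 2) := by
    rw [h𝕀, Matrix.det_fin_three]
    simp
    ring
  have hunit : IsUnit 𝕀.det := by
    rw [hdet, isUnit_iff_ne_zero]
    positivity
  have hw : a 2 = 𝕀 *ᵥ ![0, 0, r₂ ^ 2 / (r₁ ^ 2 + r₂ ^ 2)] := by
    rw [ha2, h𝕀]
    ext i
    fin_cases i <;> simp [Matrix.mulVec, dotProduct, Fin.sum_univ_three]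
    field_simp
  have hinv : 𝕀⁻¹ *ᵥ (a 2) = ![0, 0, r₂ ^ 2 / (r₁ ^ 2 + r₂ ^ 2)] := by
    rw [hw, Matrix.mulVec_mulVec, Matrix.nonsing_inv_mul _ hunit, Matrix.one_mulVec]
  have h22 : g 2 2 = r₁ ^ 2 * r₂ ^ 2 / (r₁ ^ 2 + r₂ ^ 2) := by
    rw [hg, hinv, ha2, hh, ← key]
    simp [dotProduct, Fin.sum_univ_three]
    ring
  refine ⟨?_, key⟩
  ext i j
  fin_cases i <;> fin_cases j
  case _ => simp [hg, ha0, hh]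
  case _ => simp [hg, ha0, hh]
  case _ => simp [hg, ha0, hh]
  case _ => simp [hg, ha1, hh]
  case _ => simp [hg, ha1, hh]
  case _ => simp [hg, ha1, hh]
  case _ => simp [hg, ha0, hh]
  case _ => simp [hg, ha1, hh]
  case _ => simpa using h22
end

section
/- Let r₁, r₂, φ, ω₁, ω₂, ω₃, ṙ₁, ṙ₂, φ̇ : ℝ → ℝ be continuous with r₁(t) ≠ 0, r₂(t) ≠ 0 for all t, φ(0) = 0, sin φ(t) ≠ 0 for t ≠ 0 near 0, and ω₂(0) = 0. Define along the motion J₁ = r₂² ω₁ sin² φ − r₂² ω₂ sin φ cos φ, J₂ = −r₂² ω₁ sin φ cos φ + (r₁² + r₂² cos² φ) ω₂, J₃ = (r₁² + r₂²) ω₃ + r₂² φ̇, p₁ = ṙ₁, p₂ = ṙ₂, p₃ = (r₁² r₂²/(r₁² + r₂²)) φ̇ + (r₂²/(r₁² + r₂²)) J₃, and for t ≠ 0 set H(t) = ½ { ((r₁² + r₂² cos² φ)/(r₁² r₂² sin² φ)) J₁² + (2 cos φ/(r₁² sin φ)) J₁ J₂ + (1/r₁²) J₂² + (1/(r₁² +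 r₂²)) J₃² + p₁² + p₂² + ((r₁² + r₂²)/(r₁² r₂²)) (p₃ − (r₂²/(r₁² + r₂²)) J₃)² } (all functions evaluated at t). Then H(t) converges as t → 0 to ½ { J₃(0)²/(r₁(0)² + r₂(0)²) + p₁(0)² + p₂(0)² + ((r₁(0)² + r₂(0)²)/(r₁(0)² r₂(0)²)) (p₃(0) − (r₂(0)²/(r₁(0)² + r₂(0)²)) J₃(0))² }, the value of the reduced Hamiltonian computed directly at the collinear configuration. -/
open Real Filter Topology

/-- Along a motion of a three-body system passing through a collinear
configuration at `t = 0` (with `ω₂(0) = 0`), the ro-vibrational Hamiltonian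
(kinetic part) extends continuously: `H(t)` converges as `t → 0` to the value
of the reduced Hamiltonian computed directly at the collinear configuration. -/
theorem rovibrational_hamiltonian_collinear_limit
    (r₁ r₂ φ ω₁ ω₂ ω₃ r₁' r₂' φ' : ℝ → ℝ)
    (hr₁ : Continuous r₁) (hr₂ : Continuous r₂) (hφ : Continuous φ)
    (hω₁ : Continuous ω₁) (hω₂ : Continuous ω₂) (hω₃ : Continuous ω₃)
    (hr₁' : Continuous r₁') (hr₂' : Continuous r₂') (hφ' : Continuous φ')
    (hr₁ne : ∀ t, r₁ t ≠ 0) (hr₂ne : ∀ t, r₂ t ≠ 0)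
    (hφ0 : φ 0 = 0)
    (hφne : ∀ᶠ t in 𝓝[≠] (0 : ℝ), sin (φ t) ≠ 0)
    (hω₂0 : ω₂ 0 = 0)
    (J₁ J₂ J₃ p₁ p₂ p₃ H : ℝ → ℝ)
    (hJ₁ : ∀ t, J₁ t = r₂ t ^ 2 * ω₁ t * sin (φ t) ^ 2
        - r₂ t ^ 2 * ω₂ t * sin (φ t) * cos (φ t))
    (hJ₂ : ∀ t, J₂ t = -(r₂ t ^ 2 * ω₁ t * sin (φ t) * cos (φ t))
        + (r₁ t ^ 2 + r₂ t ^ 2 * cos (φ t) ^ 2) * ω₂ t)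
    (hJ₃ : ∀ t, J₃ t = (r₁ t ^ 2 + r₂ t ^ 2) * ω₃ t + r₂ t ^ 2 * φ' t)
    (hp₁ : ∀ t, p₁ t = r₁' t) (hp₂ : ∀ t, p₂ t = r₂' t)
    (hp₃ : ∀ t, p₃ t = r₁ t ^ 2 * r₂ t ^ 2 / (r₁ t ^ 2 + r₂ t ^ 2) * φ' t
        + r₂ t ^ 2 / (r₁ t ^ 2 + r₂ t ^ 2) * J₃ t)
    (hH : ∀ t, t ≠ 0 → H t = (1 / 2 : ℝ) *
        ((r₁ t ^ 2 + r₂ t ^ 2 * cos (φ t) ^ 2) / (r₁ t ^ 2 * r₂ t ^ 2 * sin (φ t) ^ 2)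
            * J₁ t ^ 2
          + 2 * cos (φ t) / (r₁ t ^ 2 * sin (φ t)) * (J₁ t * J₂ t)
          + 1 / r₁ t ^ 2 * J₂ t ^ 2
          + 1 / (r₁ t ^ 2 + r₂ t ^ 2) * J₃ t ^ 2
          + p₁ t ^ 2 + p₂ t ^ 2
          + (r₁ t ^ 2 + r₂ t ^ 2) / (r₁ t ^ 2 * r₂ t ^ 2)
            * (p₃ t - r₂ t ^ 2 / (r₁ t ^ 2 + r₂ t ^ 2) * J₃ t) ^ 2)) :
    Tendsto H (𝓝[≠] (0 : ℝ))
      (𝓝 ((1 / 2 : ℝ) *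
        (J₃ 0 ^ 2 / (r₁ 0 ^ 2 + r₂ 0 ^ 2) + p₁ 0 ^ 2 + p₂ 0 ^ 2
          + (r₁ 0 ^ 2 + r₂ 0 ^ 2) / (r₁ 0 ^ 2 * r₂ 0 ^ 2)
            * (p₃ 0 - r₂ 0 ^ 2 / (r₁ 0 ^ 2 + r₂ 0 ^ 2) * J₃ 0) ^ 2))) := by
  have hsum : ∀ t, r₁ t ^ 2 + r₂ t ^ 2 ≠ 0 := fun t => by
    have h1 := hr₁ne t
    positivity
  have cJ₂ : Continuous J₂ := by
    rw [funext hJ₂]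
    fun_prop
  have cJ₃ : Continuous J₃ := by
    rw [funext hJ₃]
    fun_prop
  have cp₁ : Continuous p₁ := by
    rw [funext hp₁]
    fun_prop
  have cp₂ : Continuous p₂ := by
    rw [funext hp₂]
    fun_prop
  have cq : Continuous fun t => r₂ t ^ 2 / (r₁ t ^ 2 + r₂ t ^ 2) :=
    Continuous.div (by fun_prop) (by fun_prop) hsum
  have cp₃ : Continuous p₃ := by
    rw [funext hp₃]
    have h : Continuous fun t => r₁ t ^ 2 * r₂ t ^ 2 / (r₁ t ^ 2 + r₂ t ^ 2) :=
      Continuous.div (by fun_prop) (by fun_prop) hsum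
    exact (h.mul hφ').add (cq.mul cJ₃)
  obtain ⟨K, hK⟩ : ∃ K : ℝ → ℝ, ∀ t, K t =
      r₂ t ^ 2 * ω₁ t * sin (φ t) - r₂ t ^ 2 * ω₂ t * cos (φ t) := ⟨_, fun _ => rfl⟩
  have cK : Continuous K := by
    rw [funext hK]
    fun_prop
  have hJK : ∀ t, J₁ t = sin (φ t) * K t := fun t => by
    rw [hJ₁, hK]
    ring
  have hprod : ∀ t, r₁ t ^ 2 * r₂ t ^ 2 ≠ 0 := fun t =>
    mul_ne_zero (pow_ne_zero 2 (hr₁ne t)) (pow_ne_zero 2 (hr₂ne t))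
  have ca : Continuous fun t =>
      (r₁ t ^ 2 + r₂ t ^ 2 * cos (φ t) ^ 2) / (r₁ t ^ 2 * r₂ t ^ 2) :=
    Continuous.div (by fun_prop) (by fun_prop) hprod
  have cb : Continuous fun t => 2 * cos (φ t) / r₁ t ^ 2 :=
    Continuous.div (by fun_prop) (by fun_prop) (fun t => pow_ne_zero 2 (hr₁ne t))
  have cc : Continuous fun t => 1 / r₁ t ^ 2 :=
    Continuous.div (by fun_prop) (by fun_prop) (fun t => pow_ne_zero 2 (hr₁ne t))
  have cd : Continuous fun t => 1 / (r₁ t ^ 2 + r₂ t ^ 2) :=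
    Continuous.div (by fun_prop) (by fun_prop) hsum
  have ce : Continuous fun t => (r₁ t ^ 2 + r₂ t ^ 2) / (r₁ t ^ 2 * r₂ t ^ 2) :=
    Continuous.div (by fun_prop) (by fun_prop) hprod
  have cG : Continuous fun t => (1 / 2 : ℝ) *
        ((r₁ t ^ 2 + r₂ t ^ 2 * cos (φ t) ^ 2) / (r₁ t ^ 2 * r₂ t ^ 2) * K t ^ 2
          + 2 * cos (φ t) / r₁ t ^ 2 * (K t * J₂ t)
          + 1 / r₁ t ^ 2 * J₂ t ^ 2
          + 1 / (r₁ t ^ 2 + r₂ t ^ 2) * J₃ t ^ 2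
          + p₁ t ^ 2 + p₂ t ^ 2
          + (r₁ t ^ 2 + r₂ t ^ 2) / (r₁ t ^ 2 * r₂ t ^ 2)
            * (p₃ t - r₂ t ^ 2 / (r₁ t ^ 2 + r₂ t ^ 2) * J₃ t) ^ 2) :=
    continuous_const.mul
      (((((((ca.mul (cK.pow 2)).add (cb.mul (cK.mul cJ₂))).add (cc.mul (cJ₂.pow 2))).add
        (cd.mul (cJ₃.pow 2))).add (cp₁.pow 2)).add (cp₂.pow 2)).add
        (ce.mul ((cp₃.sub (cq.mul cJ₃)).pow 2)))
  have hK0 : K 0 = 0 := by simp [hK, hφ0, hω₂0]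
  have hJ0 : J₂ 0 = 0 := by simp [hJ₂, hφ0, hω₂0]
  have hlim := (cG.tendsto 0).mono_left (nhdsWithin_le_nhds (s := {(0 : ℝ)}ᶜ))
  refine Tendsto.congr' ?_ (hlim.trans (le_of_eq ?_))
  · filter_upwards [hφne, self_mem_nhdsWithin] with t hs ht
    rw [hH t ht, hJK t]
    have h1 := hr₁ne t
    have h2 := hr₂ne t
    have e1 : (r₁ t ^ 2 + r₂ t ^ 2 * cos (φ t) ^ 2) / (r₁ t ^ 2 * r₂ t ^ 2 * sin (φ t) ^ 2)
        * (sin (φ t) * K t) ^ 2 =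
        (r₁ t ^ 2 + r₂ t ^ 2 * cos (φ t) ^ 2) / (r₁ t ^ 2 * r₂ t ^ 2) * K t ^ 2 := by
      field_simp
    have e2 : 2 * cos (φ t) / (r₁ t ^ 2 * sin (φ t)) * (sin (φ t) * K t * J₂ t) =
        2 * cos (φ t) / r₁ t ^ 2 * (K t * J₂ t) := by
      field_simp
    rw [e1, e2]
  · rw [hK0, hJ0]
    congr 1
    ring
end
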